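/- arXiv:2009.11855 — 2 statements merged into one kernel-verified Lean document; each statement's English description precedes it below -/
import Mathlib

section
/- If the Hermitian Toeplitz matrix T_y is neither positive semidefinite nor negative semidefinite (equivalently, it has at least one positive and at least one negative eigenvalue), then (BPC) has a unique solution w*, and w* is of the form Σ_{i=1}^N a_i δ_{x_i} with 1 ≤ N ≤ 2K_c, pairwise distinct x_i ∈ 𝕋, nonzero real weights a_i, at least one a_i > 0 and at least one a_j < 0. -/
open MeasureTheory Complex Real Matrix
open scoped Real ComplexOrder

noncomputable section

instance : Fact (0 < 2 * π) := ⟨by positivity⟩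

/-- The circle `𝕋 = ℝ/2πℤ`. -/
abbrev Circle2pi := AddCircle (2 * π)

/-- The `k`-th Fourier coefficient of a finite signed Borel measure `w` on `𝕋`:
`ŵ[k] = ∫ e^{-ikt} dw⁺(t) - ∫ e^{-ikt} dw⁻(t)`, where `w = w⁺ - w⁻` is the Jordan
decomposition. -/
noncomputable def sFourierCoeff (w : MeasureTheory.SignedMeasure Circle2pi) (k : ℤ) : ℂ :=
  (∫ t, fourier (-k) t ∂w.toJordanDecomposition.posPart)
    - ∫ t, fourier (-k) t ∂w.toJordanDecomposition.negPart

/-- The total variation norm `‖w‖ = w⁺(𝕋) + w⁻(𝕋)`. -/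
noncomputable def tvNorm (w : MeasureTheory.SignedMeasure Circle2pi) : ℝ :=
  (w.totalVariation Set.univ).toReal

/-- `w` is feasible for the data `y` : `ŵ[k] = y k` for all `|k| ≤ K_c`. -/
def Feasible (Kc : ℕ) (y : ℤ → ℂ) (w : MeasureTheory.SignedMeasure Circle2pi) : Prop :=
  ∀ k : ℤ, |k| ≤ (Kc : ℤ) → sFourierCoeff w k = y k

/-- `w` is a solution of the problem (BPC): it is feasible and minimizes the total
variation norm among feasible measures. -/
def IsBPCSolution (Kc : ℕ) (y : ℤ → ℂ) (w : MeasureTheory.SignedMeasure Circle2pi) : Prop :=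
  Feasible Kc y w ∧ ∀ v : MeasureTheory.SignedMeasure Circle2pi, Feasible Kc y v →
    tvNorm w ≤ tvNorm v

/-- The Dirac measure at `x ∈ 𝕋`, viewed as a signed measure. -/
noncomputable def diracSM (x : Circle2pi) : MeasureTheory.SignedMeasure Circle2pi :=
  (MeasureTheory.Measure.dirac x).toSignedMeasure

/-- The Hermitian Toeplitz matrix `T_y` with entries `(T_y)_{i,j} = y_{j-i}`. -/
def Ty (Kc : ℕ) (y : ℤ → ℂ) : Matrix (Fin (Kc + 1)) (Fin (Kc + 1)) ℂ :=
  Matrix.of fun i j => y ((j : ℤ) - (i : ℤ))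

/-! ### Integration against differences of finite measures -/

lemma integrable_of_continuous {F : Type*} [NormedAddCommGroup F] [SecondCountableTopology F]
    {h : Circle2pi → F} (hh : Continuous h) (μ : Measure Circle2pi) [IsFiniteMeasure μ] :
    Integrable h μ :=
  hh.integrable_of_hasCompactSupport (HasCompactSupport.of_compactSpace h)

lemma posPart_add_eq_negPart_add (μ ν : Measure Circle2pi) [IsFiniteMeasure μ]
    [IsFiniteMeasure ν] :
    (μ.toSignedMeasure - ν.toSignedMeasure).toJordanDecomposition.posPart + ν =
      (μ.toSignedMeasure - ν.toSignedMeasure).toJordanDecomposition.negPart + μ := by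
  set w := μ.toSignedMeasure - ν.toSignedMeasure with hw
  have h := w.toSignedMeasure_toJordanDecomposition
  rw [← Measure.toSignedMeasure_eq_toSignedMeasure_iff, Measure.toSignedMeasure_add,
    Measure.toSignedMeasure_add]
  rw [JordanDecomposition.toSignedMeasure, sub_eq_iff_eq_add] at h
  rw [h, hw]
  abel

lemma integral_posPart_sub_integral_negPart {F : Type*} [NormedAddCommGroup F] [NormedSpace ℝ F]
    [SecondCountableTopology F] {h : Circle2pi → F} (hh : Continuous h)
    (μ ν : Measure Circle2pi) [IsFiniteMeasure μ] [IsFiniteMeasure ν] :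
    ∫ t, h t ∂(μ.toSignedMeasure - ν.toSignedMeasure).toJordanDecomposition.posPart
      - ∫ t, h t ∂(μ.toSignedMeasure - ν.toSignedMeasure).toJordanDecomposition.negPart
      = ∫ t, h t ∂μ - ∫ t, h t ∂ν := by
  have h1 := congrArg (fun m => ∫ t, h t ∂m) (posPart_add_eq_negPart_add μ ν)
  rw [integral_add_measure (integrable_of_continuous hh _) (integrable_of_continuous hh _),
    integral_add_measure (integrable_of_continuous hh _) (integrable_of_continuous hh _)] at h1
  rw [sub_eq_sub_iff_add_eq_add, h1, add_comm]

lemma tvNorm_eq (w : SignedMeasure Circle2pi) :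
    tvNorm w = w.toJordanDecomposition.posPart.real Set.univ
      + w.toJordanDecomposition.negPart.real Set.univ := by
  rw [tvNorm, SignedMeasure.totalVariation, Measure.add_apply,
    ENNReal.toReal_add (measure_ne_top _ _) (measure_ne_top _ _)]
  rfl

lemma tvNorm_sub_le (μ ν : Measure Circle2pi) [IsFiniteMeasure μ] [IsFiniteMeasure ν] :
    tvNorm (μ.toSignedMeasure - ν.toSignedMeasure) ≤ μ.real Set.univ + ν.real Set.univ := by
  rw [tvNorm_eq]
  have h := posPart_add_eq_negPart_add μ ν
  set w := μ.toSignedMeasure - ν.toSignedMeasure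
  obtain ⟨S, hS, hpos, hneg⟩ := w.toJordanDecomposition.mutuallySingular
  have key : ∀ A : Set Circle2pi,
      w.toJordanDecomposition.posPart.real A + ν.real A
        = w.toJordanDecomposition.negPart.real A + μ.real A := fun A => by
    rw [← measureReal_add_apply, ← measureReal_add_apply, h]
  have e1 : w.toJordanDecomposition.posPart.real S = 0 := by simp [measureReal_def, hpos]
  have e2 : w.toJordanDecomposition.negPart.real Sᶜ = 0 := by simp [measureReal_def, hneg]
  have k1 := key S
  have k2 := key Sᶜ
  have split : ∀ m : Measure Circle2pi, IsFiniteMeasure m →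
      m.real Set.univ = m.real S + m.real Sᶜ := fun m _ => (measureReal_add_measureReal_compl hS).symm
  rw [split _ inferInstance, split _ inferInstance, split μ inferInstance, split ν inferInstance]
  have := measureReal_nonneg (μ := ν) (s := Sᶜ)
  have := measureReal_nonneg (μ := μ) (s := S)
  linarith

/-! ### The trigonometric moment curve -/

/-- The trigonometric moment curve `t ↦ (e^{-ikt})_{0 ≤ k ≤ Kc}`. -/
def momentCurve (Kc : ℕ) (t : Circle2pi) : Fin (Kc + 1) → ℂ := fun k => fourier (-(k : ℤ)) t

lemma continuous_momentCurve (Kc : ℕ) : Continuous (momentCurve Kc) :=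
  continuous_pi fun k => (fourier (-(k : ℤ))).continuous

lemma integral_momentCurve_apply {Kc : ℕ} (μ : Measure Circle2pi) [IsFiniteMeasure μ]
    (k : Fin (Kc + 1)) :
    (∫ t, momentCurve Kc t ∂μ) k = ∫ t, fourier (-(k : ℤ)) t ∂μ :=
  eval_integral (fun i : Fin (Kc + 1) =>
    integrable_of_continuous (fourier (-(i : ℤ))).continuous μ) k

/-- The difference of the moment vectors of the positive and negative parts of `w`. -/
def signedMoment (Kc : ℕ) (w : SignedMeasure Circle2pi) : Fin (Kc + 1) → ℂ :=
  ∫ t, momentCurve Kc t ∂w.toJordanDecomposition.posPart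
    - ∫ t, momentCurve Kc t ∂w.toJordanDecomposition.negPart

lemma signedMoment_apply {Kc : ℕ} (w : SignedMeasure Circle2pi) (k : Fin (Kc + 1)) :
    signedMoment Kc w k = sFourierCoeff w (k : ℕ) := by
  rw [signedMoment, Pi.sub_apply, integral_momentCurve_apply, integral_momentCurve_apply,
    sFourierCoeff]

lemma sFourierCoeff_neg (w : SignedMeasure Circle2pi) (k : ℤ) :
    sFourierCoeff w (-k) = starRingEnd ℂ (sFourierCoeff w k) := by
  simp only [sFourierCoeff, map_sub, ← integral_conj, ← fourier_neg]

lemma feasible_iff_signedMoment {Kc : ℕ} {y : ℤ → ℂ}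
    (hsym : ∀ k : ℤ, |k| ≤ (Kc : ℤ) → y (-k) = starRingEnd ℂ (y k))
    (w : SignedMeasure Circle2pi) :
    Feasible Kc y w ↔ signedMoment Kc w = fun k : Fin (Kc + 1) => y (k : ℕ) := by
  constructor
  · intro h
    ext k
    rw [signedMoment_apply]
    exact h _ (by rw [abs_of_nonneg (by positivity)]; have := k.2; omega)
  · intro h k hk
    have hnat : ∀ n : ℕ, n ≤ Kc → sFourierCoeff w n = y n := fun n hn => by
      have := congrFun h ⟨n, by omega⟩
      rwa [signedMoment_apply] at this
    obtain ⟨n, rfl | rfl⟩ := k.eq_nat_or_neg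
    · exact hnat n (by simpa using hk)
    · have hn : n ≤ Kc := by simpa using hk
      rw [sFourierCoeff_neg, hnat n hn, hsym n (by simpa using hn)]

lemma apply_signedMoment {Kc : ℕ} (f : (Fin (Kc + 1) → ℂ) →L[ℝ] ℝ)
    (w : SignedMeasure Circle2pi) :
    f (signedMoment Kc w) = ∫ t, f (momentCurve Kc t) ∂w.toJordanDecomposition.posPart
      - ∫ t, f (momentCurve Kc t) ∂w.toJordanDecomposition.negPart := by
  rw [signedMoment, map_sub, f.integral_comp_comm (integrable_of_continuous
    (continuous_momentCurve Kc) _), f.integral_comp_comm (integrable_of_continuous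
    (continuous_momentCurve Kc) _)]

/-- The moment vectors of pairs of finite measures of total mass at most `ρ`. -/
def momentBall (Kc : ℕ) (ρ : ℝ) : Set (Fin (Kc + 1) → ℂ) :=
  (fun p : FiniteMeasure Circle2pi × FiniteMeasure Circle2pi =>
      ∫ t, momentCurve Kc t ∂(p.1 : Measure Circle2pi)
        - ∫ t, momentCurve Kc t ∂(p.2 : Measure Circle2pi)) ''
    {p | (p.1.mass : ℝ) + p.2.mass ≤ ρ}

lemma continuous_integral_momentCurve (Kc : ℕ) :
    Continuous fun μ : FiniteMeasure Circle2pi =>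
      ∫ t, momentCurve Kc t ∂(μ : Measure Circle2pi) := by
  refine continuous_pi fun k => ?_
  simp only [integral_momentCurve_apply]
  have h : ∀ μ : FiniteMeasure Circle2pi,
      ∫ t, fourier (-(k : ℤ)) t ∂(μ : Measure Circle2pi)
        = ((∫ t, (fourier (-(k : ℤ)) t).re ∂(μ : Measure Circle2pi) : ℝ) : ℂ)
          + (∫ t, (fourier (-(k : ℤ)) t).im ∂(μ : Measure Circle2pi) : ℝ) * I := fun μ =>
    (integral_re_add_im (𝕜 := ℂ)
      (integrable_of_continuous (fourier (-(k : ℤ))).continuous _)).symm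
  simp only [h]
  have h1 := FiniteMeasure.continuous_integral_continuousMap (X := Circle2pi)
    (⟨fun t => (fourier (-(k : ℤ)) t).re, by fun_prop⟩ : C(Circle2pi, ℝ))
  have h2 := FiniteMeasure.continuous_integral_continuousMap (X := Circle2pi)
    (⟨fun t => (fourier (-(k : ℤ)) t).im, by fun_prop⟩ : C(Circle2pi, ℝ))
  simp only [ContinuousMap.coe_mk] at h1 h2
  fun_prop

lemma isCompact_momentBall (Kc : ℕ) (ρ : ℝ) : IsCompact (momentBall Kc ρ) := by
  refine IsCompact.image ?_ (((continuous_integral_momentCurve Kc).comp continuous_fst).sub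
    ((continuous_integral_momentCurve Kc).comp continuous_snd))
  have hc := isCompact_setOfPred_finiteMeasure_le_of_compactSpace Circle2pi ρ.toNNReal
  refine (hc.prod hc).of_isClosed_subset (isClosed_le (by fun_prop) (by fun_prop)) ?_
  rintro ⟨μ, ν⟩ h
  simp only [Set.mem_ofPred_eq] at h
  constructor <;> simp only [Set.mem_ofPred_eq] <;> apply NNReal.le_toNNReal_of_coe_le
  · linarith [ν.mass.coe_nonneg]
  · linarith [μ.mass.coe_nonneg]

lemma convex_momentBall (Kc : ℕ) (ρ : ℝ) : Convex ℝ (momentBall Kc ρ) := by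
  rintro _ ⟨⟨μ₁, ν₁⟩, h₁, rfl⟩ _ ⟨⟨μ₂, ν₂⟩, h₂, rfl⟩ a b ha hb hab
  lift a to NNReal using ha
  lift b to NNReal using hb
  refine ⟨(a • μ₁ + b • μ₂, a • ν₁ + b • ν₂), ?_, ?_⟩
  · simp only [Set.mem_ofPred_eq] at h₁ h₂ ⊢
    have hm : ∀ m n : FiniteMeasure Circle2pi,
        (((a • m + b • n).mass : NNReal) : ℝ) = a * m.mass + b * n.mass := fun m n => by
      rw [FiniteMeasure.mass, FiniteMeasure.coeFn_add, Pi.add_apply, FiniteMeasure.coeFn_smul,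
        FiniteMeasure.coeFn_smul]
      rfl
    rw [hm, hm]
    have := mul_le_mul_of_nonneg_left h₁ a.coe_nonneg
    have := mul_le_mul_of_nonneg_left h₂ b.coe_nonneg
    have hρ : (a : ℝ) * ρ + b * ρ = ρ := by rw [← add_mul, hab, one_mul]
    linarith
  · have hm : ∀ m n : FiniteMeasure Circle2pi,
        ∫ t, momentCurve Kc t ∂((a • m + b • n : FiniteMeasure Circle2pi) : Measure Circle2pi)
          = (a : ℝ) • ∫ t, momentCurve Kc t ∂(m : Measure Circle2pi)
            + (b : ℝ) • ∫ t, momentCurve Kc t ∂(n : Measure Circle2pi) := fun m n => by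
      have hi := fun (m : FiniteMeasure Circle2pi) =>
        integrable_of_continuous (continuous_momentCurve Kc) (m : Measure Circle2pi)
      rw [FiniteMeasure.toMeasure_add, integral_add_measure (hi _) (hi _),
        FiniteMeasure.toMeasure_smul, FiniteMeasure.toMeasure_smul, integral_smul_nnreal_measure,
        integral_smul_nnreal_measure]
      rfl
    simp only [hm]
    module

lemma smul_momentCurve_mem_momentBall {Kc : ℕ} {ρ : ℝ} (hρ : 0 ≤ ρ) (t : Circle2pi) :
    ρ • momentCurve Kc t ∈ momentBall Kc ρ := by
  lift ρ to NNReal using hρ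
  let δ : FiniteMeasure Circle2pi := ⟨Measure.dirac t, inferInstance⟩
  refine ⟨(ρ • δ, 0), ?_, ?_⟩
  · have hδ : δ.mass = 1 := by
      rw [FiniteMeasure.mass, FiniteMeasure.mk_apply, measure_univ, ENNReal.toNNReal_one]
    have hm : (ρ • δ).mass = ρ * δ.mass := by
      rw [FiniteMeasure.mass, FiniteMeasure.coeFn_smul]
      rfl
    simp [hm, hδ]
  · dsimp only
    rw [FiniteMeasure.toMeasure_smul, integral_smul_nnreal_measure, FiniteMeasure.toMeasure_mk,
      integral_dirac]
    simp [NNReal.smul_def]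

lemma neg_mem_momentBall {Kc : ℕ} {ρ : ℝ} {z : Fin (Kc + 1) → ℂ} (hz : z ∈ momentBall Kc ρ) :
    -z ∈ momentBall Kc ρ := by
  obtain ⟨⟨μ, ν⟩, h, rfl⟩ := hz
  exact ⟨(ν, μ), by simpa [add_comm] using h, by simp⟩

lemma exists_tvNorm_le_of_mem_momentBall {Kc : ℕ} {ρ : ℝ} {z : Fin (Kc + 1) → ℂ}
    (hz : z ∈ momentBall Kc ρ) :
    ∃ w : SignedMeasure Circle2pi, signedMoment Kc w = z ∧ tvNorm w ≤ ρ := by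
  obtain ⟨⟨μ, ν⟩, h, rfl⟩ := hz
  exact ⟨(μ : Measure Circle2pi).toSignedMeasure - (ν : Measure Circle2pi).toSignedMeasure,
    integral_posPart_sub_integral_negPart (continuous_momentCurve Kc) _ _,
    (tvNorm_sub_le _ _).trans h⟩

/-! ### Duality -/

lemma integral_fourier_haar (n : ℤ) :
    ∫ t : Circle2pi, fourier n t ∂AddCircle.haarAddCircle = if n = 0 then 1 else 0 := by
  have h := orthonormal_iff_ite.mp (orthonormal_fourier (T := 2 * π)) 0 n
  rw [ContinuousMap.inner_toLp (@AddCircle.haarAddCircle (2 * π) _) (fourier 0) (fourier n)] at h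
  simpa [eq_comm] using h

lemma exists_density {Kc : ℕ} {y : ℤ → ℂ}
    (hsym : ∀ k : ℤ, |k| ≤ (Kc : ℤ) → y (-k) = starRingEnd ℂ (y k)) :
    ∃ q : C(Circle2pi, ℝ), ∫ t, q t • momentCurve Kc t ∂AddCircle.haarAddCircle
      = fun k : Fin (Kc + 1) => y (k : ℕ) := by
  let S := Finset.Icc (-(Kc : ℤ)) Kc
  let Q : C(Circle2pi, ℂ) := ∑ k ∈ S, y k • fourier k
  have hQ : ∀ t, Q t = ∑ k ∈ S, y k * fourier k t := fun t => by
    simp [Q, ContinuousMap.sum_apply]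
  have hreal : ∀ t, ((Q t).re : ℂ) = Q t := fun t => by
    rw [← Complex.conj_eq_iff_re, hQ, map_sum]
    refine Finset.sum_equiv (Equiv.neg ℤ) (fun k => ?_) fun k hk => ?_
    · simp only [S, Finset.mem_Icc, Equiv.neg_apply]
      omega
    · rw [map_mul, Equiv.neg_apply, fourier_neg, hsym k]
      rw [abs_le]
      simpa [S] using hk
  refine ⟨⟨fun t => (Q t).re, by fun_prop⟩, ?_⟩
  have hint : ∀ i : Fin (Kc + 1), Integrable
      (fun t => (((Q t).re • momentCurve Kc t) i : ℂ)) AddCircle.haarAddCircle := fun i =>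
    integrable_of_continuous ((continuous_apply i).comp
      ((Complex.continuous_re.comp Q.continuous).smul (continuous_momentCurve Kc))) _
  ext j
  simp only [ContinuousMap.coe_mk]
  rw [eval_integral hint]
  have hprod : ∀ t : Circle2pi, ((Q t).re • momentCurve Kc t) j
      = ∑ k ∈ S, y k * fourier (k - (j : ℕ)) t := fun t => by
    rw [Pi.smul_apply, Complex.real_smul, hreal, hQ, Finset.sum_mul]
    refine Finset.sum_congr rfl fun k _ => ?_
    rw [momentCurve, mul_assoc, ← fourier_add, sub_eq_add_neg]
  simp only [hprod]
  rw [integral_finsetSum _ fun k _ => (integrable_of_continuous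
    (fourier (k - (j : ℕ))).continuous _).const_mul (y k)]
  simp only [integral_const_mul, integral_fourier_haar, sub_eq_zero, mul_ite, mul_one, mul_zero]
  rw [Finset.sum_ite_eq' S, if_pos]
  have := j.2
  simp only [S, Finset.mem_Icc]
  omega

/-- The real trigonometric polynomial attached to a real linear functional on moment vectors. -/
def trigPoly (Kc : ℕ) : ((Fin (Kc + 1) → ℂ) →L[ℝ] ℝ) →ₗ[ℝ] C(Circle2pi, ℝ) where
  toFun f := ⟨fun t => f (momentCurve Kc t), f.continuous.comp (continuous_momentCurve Kc)⟩
  map_add' _ _ := rfl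
  map_smul' _ _ := rfl

lemma trigPoly_apply {Kc : ℕ} (f : (Fin (Kc + 1) → ℂ) →L[ℝ] ℝ) (t : Circle2pi) :
    trigPoly Kc f t = f (momentCurve Kc t) := rfl

lemma exists_norm_attaining {W : Type*} [NormedAddCommGroup W] [NormedSpace ℝ W]
    [FiniteDimensional ℝ W] (L : W →ₗ[ℝ] ℝ) :
    ∃ p : W, ‖p‖ ≤ 1 ∧ 0 ≤ L p ∧ ∀ p', L p' ≤ L p * ‖p'‖ := by
  have : ProperSpace W := FiniteDimensional.proper_real W
  obtain ⟨p, hp, hmax⟩ := (isCompact_closedBall (0 : W) 1).exists_isMaxOn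
    ⟨0, by simp⟩ (LinearMap.continuous_of_finiteDimensional L).continuousOn
  have hle : ∀ p' : W, ‖p'‖ ≤ 1 → L p' ≤ L p := fun p' hp' => hmax (by simpa using hp')
  refine ⟨p, by simpa using hp, by simpa using hle 0 (by simp), fun p' => ?_⟩
  rcases eq_or_ne p' 0 with rfl | hp'
  · simp
  have hn : 0 < ‖p'‖ := norm_pos_iff.mpr hp'
  have h := hle (‖p'‖⁻¹ • p') (by rw [norm_smul, norm_inv, norm_norm, inv_mul_cancel₀ hn.ne'])
  rw [map_smul, smul_eq_mul, inv_mul_le_iff₀ hn] at h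
  linarith

lemma exists_dual_certificate {Kc : ℕ} {y : ℤ → ℂ}
    (hsym : ∀ k : ℤ, |k| ≤ (Kc : ℤ) → y (-k) = starRingEnd ℂ (y k)) :
    ∃ f : (Fin (Kc + 1) → ℂ) →L[ℝ] ℝ, (∀ t, |f (momentCurve Kc t)| ≤ 1) ∧
      (fun k : Fin (Kc + 1) => y (k : ℕ)) ∈
        momentBall Kc (f fun k : Fin (Kc + 1) => y (k : ℕ)) := by
  obtain ⟨q, hq⟩ := exists_density hsym
  set Y : Fin (Kc + 1) → ℂ := fun k => y (k : ℕ)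
  let V := LinearMap.range (trigPoly Kc)
  let L : V →ₗ[ℝ] ℝ :=
    { toFun := fun p => ∫ t, q t * (p : C(Circle2pi, ℝ)) t ∂AddCircle.haarAddCircle
      map_add' := fun p p' => by
        simp only [Submodule.coe_add, ContinuousMap.add_apply, mul_add]
        exact integral_add (integrable_of_continuous (by fun_prop) _)
          (integrable_of_continuous (by fun_prop) _)
      map_smul' := fun c p => by
        simp only [Submodule.coe_smul, ContinuousMap.smul_apply, smul_eq_mul, RingHom.id_apply,
          ← integral_const_mul]
        congr 1
        ext t
        ring }
  have hL : ∀ f, L ⟨trigPoly Kc f, LinearMap.mem_range_self _ f⟩ = f Y := fun f => by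
    have hint : Integrable (fun t => q t • momentCurve Kc t) AddCircle.haarAddCircle :=
      integrable_of_continuous (q.continuous.smul (continuous_momentCurve Kc)) _
    have h := f.integral_comp_comm hint
    simp only [map_smul, smul_eq_mul, hq] at h
    exact h
  obtain ⟨⟨p, hp⟩, hp1, hp0, hscale⟩ := exists_norm_attaining (W := V) L
  obtain ⟨f, rfl⟩ := LinearMap.mem_range.mp hp
  have hf : L ⟨trigPoly Kc f, hp⟩ = f Y := hL f
  rw [hf] at hp0
  simp only [hf] at hscale
  refine ⟨f, fun t => ?_, ?_⟩
  · exact ((trigPoly Kc f).norm_coe_le_norm t).trans hp1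
  · by_contra hY
    obtain ⟨g, u, hgu, huY⟩ := geometric_hahn_banach_closed_point (convex_momentBall Kc (f Y))
      (isCompact_momentBall Kc (f Y)).isClosed hY
    have hmem := fun t => smul_momentCurve_mem_momentBall (Kc := Kc) hp0 t
    have hbound : ∀ t, ‖(f Y • trigPoly Kc g) t‖ ≤ u := fun t => by
      have h1 := hgu _ (hmem t)
      have h2 := hgu _ (neg_mem_momentBall (hmem t))
      rw [ContinuousMap.smul_apply, trigPoly_apply, Real.norm_eq_abs, abs_le]
      rw [map_neg, map_smul] at h2
      rw [map_smul] at h1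
      exact ⟨by linarith, h1.le⟩
    have hu : 0 ≤ u := (norm_nonneg _).trans (hbound 0)
    have h3 := (ContinuousMap.norm_le _ hu).mpr hbound
    rw [norm_smul, Real.norm_of_nonneg hp0] at h3
    have h4 := hscale ⟨trigPoly Kc g, LinearMap.mem_range_self _ g⟩
    rw [hL] at h4
    exact absurd (h4.trans h3) (not_le.mpr huY)

/-! ### Zeros of trigonometric polynomials -/

lemma fourier_one_pow (n : ℕ) (t : Circle2pi) : (fourier 1 t : ℂ) ^ n = fourier n t := by
  induction n with
  | zero => simp
  | succ n ih => rw [pow_succ, ih, ← fourier_add]; norm_cast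

lemma fourier_one_injective : Function.Injective fun t : Circle2pi => (fourier 1 t : ℂ) := by
  intro s t h
  simp only [fourier_one] at h
  exact AddCircle.injective_toCircle (by positivity) (Subtype.coe_injective h)

lemma exists_coeff {Kc : ℕ} (g : (Fin (Kc + 1) → ℂ) →L[ℝ] ℝ) :
    ∃ c : Fin (Kc + 1) → ℂ, ∀ z, g z = (∑ k, c k * z k).re := by
  refine ⟨fun k => g (Pi.single k 1) - g (Pi.single k I) * I, fun z => ?_⟩
  have hz : z = ∑ k, ((z k).re • (Pi.single k 1 : Fin (Kc + 1) → ℂ)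
      + (z k).im • (Pi.single k I : Fin (Kc + 1) → ℂ)) := by
    ext j
    simp [Finset.sum_apply, Pi.single_apply, Finset.sum_add_distrib]
  conv_lhs => rw [hz]
  rw [map_sum, Complex.re_sum]
  refine Finset.sum_congr rfl fun k _ => ?_
  simp
  ring

lemma eq_zero_or_ncard_zeros_le {Kc : ℕ} (g : (Fin (Kc + 1) → ℂ) →L[ℝ] ℝ) :
    (∀ t, g (momentCurve Kc t) = 0) ∨
      ({t | g (momentCurve Kc t) = 0}.Finite ∧
        {t | g (momentCurve Kc t) = 0}.ncard ≤ 2 * Kc) := by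
  obtain ⟨c, hc⟩ := exists_coeff g
  let P : Polynomial ℂ := ∑ k : Fin (Kc + 1),
    (Polynomial.C (c k) * Polynomial.X ^ (Kc - (k : ℕ))
      + Polynomial.C (starRingEnd ℂ (c k)) * Polynomial.X ^ (Kc + (k : ℕ)))
  have hdeg : P.natDegree ≤ 2 * Kc := by
    refine Polynomial.natDegree_sum_le_of_forall_le _ _ fun k _ => ?_
    have hk := k.2
    refine Polynomial.natDegree_add_le_of_degree_le ?_ ?_ <;>
    exact (Polynomial.natDegree_C_mul_X_pow_le _ _).trans (by omega)
  have heval : ∀ t, P.eval (fourier 1 t) = 2 * g (momentCurve Kc t) * fourier Kc t := fun t => by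
    rw [hc, Complex.re_eq_add_conj, map_sum, ← Finset.sum_add_distrib]
    simp only [P, Polynomial.eval_finsetSum]
    rw [mul_div_cancel₀ _ two_ne_zero, Finset.sum_mul]
    refine Finset.sum_congr rfl fun k _ => ?_
    have hk : (k : ℕ) ≤ Kc := by have := k.2; omega
    simp only [Polynomial.eval_add, Polynomial.eval_mul, Polynomial.eval_C, Polynomial.eval_pow,
      Polynomial.eval_X, fourier_one_pow, momentCurve, map_mul]
    rw [← fourier_neg, add_mul, mul_assoc, mul_assoc, ← fourier_add, ← fourier_add]
    congr 3
    · push_cast [hk]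
      rw [sub_eq_neg_add]
    · push_cast
      rw [neg_neg, add_comm]
  have hne : ∀ t : Circle2pi, (fourier Kc t : ℂ) ≠ 0 := fun t => by
    rw [fourier_apply]
    exact Circle.coe_ne_zero _
  rcases eq_or_ne P 0 with hP | hP
  · left
    intro t
    have h := heval t
    rw [hP, Polynomial.eval_zero] at h
    simpa [hne t] using h.symm
  · right
    have hsub : (fun t : Circle2pi => (fourier 1 t : ℂ)) '' {t | g (momentCurve Kc t) = 0}
        ⊆ (P.roots.toFinset : Set ℂ) := by
      rintro _ ⟨t, ht, rfl⟩
      simp only [Set.mem_ofPred_eq] at ht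
      have h := heval t
      rw [ht] at h
      simpa [hP] using h
    have hfin := Set.Finite.of_finite_image ((Finset.finite_toSet _).subset hsub)
      fourier_one_injective.injOn
    refine ⟨hfin, ?_⟩
    rw [← Set.ncard_image_of_injective _ fourier_one_injective]
    refine (Set.ncard_le_ncard hsub (Finset.finite_toSet _)).trans ?_
    rw [Set.ncard_coe_finset]
    exact (Multiset.toFinset_card_le _).trans (P.card_roots'.trans hdeg)

/-- Differentiation along the moment curve. -/
def momentDeriv (Kc : ℕ) : (Fin (Kc + 1) → ℂ) →L[ℝ] (Fin (Kc + 1) → ℂ) :=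
  ContinuousLinearMap.pi fun k =>
    (-(I * (k : ℕ))) • ContinuousLinearMap.proj (R := ℝ) (φ := fun _ : Fin (Kc + 1) => ℂ) k

lemma hasDerivAt_momentCurve (Kc : ℕ) (s : ℝ) :
    HasDerivAt (fun s : ℝ => momentCurve Kc (s : Circle2pi))
      (momentDeriv Kc (momentCurve Kc (s : Circle2pi))) s := by
  rw [hasDerivAt_pi]
  intro k
  have h := hasDerivAt_fourier (2 * π) (-(k : ℤ)) s
  refine h.congr_deriv ?_
  have hπ : (π : ℂ) ≠ 0 := by exact_mod_cast Real.pi_ne_zero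
  simp only [momentDeriv, momentCurve, ContinuousLinearMap.coe_pi',
    _root_.smul_apply, ContinuousLinearMap.proj_apply, smul_eq_mul]
  push_cast
  field_simp

lemma constant_or_ncard_contact_le {Kc : ℕ} {f : (Fin (Kc + 1) → ℂ) →L[ℝ] ℝ}
    (hf : ∀ t, |f (momentCurve Kc t)| ≤ 1) :
    (∃ c, ∀ t, f (momentCurve Kc t) = c) ∨
      ({t | |f (momentCurve Kc t)| = 1}.Finite ∧
        {t | |f (momentCurve Kc t)| = 1}.ncard ≤ 2 * Kc) := by
  have hderiv : ∀ s : ℝ, HasDerivAt (fun s : ℝ => f (momentCurve Kc (s : Circle2pi)))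
      ((f.comp (momentDeriv Kc)) (momentCurve Kc (s : Circle2pi))) s := fun s =>
    f.hasFDerivAt.comp_hasDerivAt s (hasDerivAt_momentCurve Kc s)
  rcases eq_zero_or_ncard_zeros_le (f.comp (momentDeriv Kc)) with h | ⟨hfin, hcard⟩
  · left
    refine ⟨f (momentCurve Kc ((0 : ℝ) : Circle2pi)), fun t => ?_⟩
    obtain ⟨s, rfl⟩ := QuotientAddGroup.mk_surjective t
    exact is_const_of_deriv_eq_zero (fun s => (hderiv s).differentiableAt)
      (fun s => by rw [(hderiv s).deriv, h]) s 0
  · right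
    have hsub : {t | |f (momentCurve Kc t)| = 1}
        ⊆ {t | (f.comp (momentDeriv Kc)) (momentCurve Kc t) = 0} := by
      intro t ht
      obtain ⟨s, rfl⟩ := QuotientAddGroup.mk_surjective t
      rcases eq_or_eq_neg_of_abs_eq ht with h1 | h1
      · refine IsLocalMax.hasDerivAt_eq_zero (Filter.Eventually.of_forall fun r => ?_) (hderiv s)
        exact (abs_le.mp (hf r)).2.trans h1.ge
      · refine IsLocalMin.hasDerivAt_eq_zero (Filter.Eventually.of_forall fun r => ?_) (hderiv s)
        exact h1.le.trans (abs_le.mp (hf r)).1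
    exact ⟨hfin.subset hsub, (Set.ncard_le_ncard hsub hfin).trans hcard⟩

lemma eq_zero_of_sum_mul_fourier_eq_zero {Kc : ℕ} {X : Finset Circle2pi}
    (hX : X.card ≤ 2 * Kc) {d : Circle2pi → ℂ}
    (hd : ∀ k : ℤ, |k| ≤ (Kc : ℤ) → ∑ x ∈ X, d x * fourier k x = 0) :
    ∀ x ∈ X, d x = 0 := by
  classical
  intro x₀ hx₀
  let P : Polynomial ℂ :=
    ∏ x ∈ X.erase x₀, (Polynomial.X - Polynomial.C (fourier 1 x : ℂ))
  have hdeg : P.natDegree < 2 * Kc + 1 := by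
    rw [Polynomial.natDegree_prod_of_monic _ _ fun x _ => Polynomial.monic_X_sub_C _]
    simp only [Polynomial.natDegree_X_sub_C, Finset.sum_const, smul_eq_mul, mul_one]
    exact ((Finset.card_le_card (X.erase_subset x₀)).trans hX).trans_lt (Nat.lt_succ_self _)
  have hexp : ∀ x, P.eval (fourier 1 x) * fourier (-(Kc : ℤ)) x
      = ∑ j ∈ Finset.range (2 * Kc + 1), P.coeff j * fourier ((j : ℤ) - Kc) x := fun x => by
    rw [Polynomial.eval_eq_sum_range' hdeg, Finset.sum_mul]
    refine Finset.sum_congr rfl fun j _ => ?_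
    rw [fourier_one_pow, mul_assoc, ← fourier_add, sub_eq_add_neg]
  have hsum : ∑ x ∈ X, d x * (P.eval (fourier 1 x) * fourier (-(Kc : ℤ)) x) = 0 := by
    simp only [hexp, Finset.mul_sum]
    rw [Finset.sum_comm]
    refine Finset.sum_eq_zero fun j hj => ?_
    have hj' := Finset.mem_range.mp hj
    have h := hd ((j : ℤ) - Kc) (by rw [abs_le]; omega)
    rw [← mul_zero (P.coeff j), ← h, Finset.mul_sum]
    exact Finset.sum_congr rfl fun x _ => by ring
  rw [Finset.sum_eq_single_of_mem x₀ hx₀ fun x hx hne => ?_] at hsum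
  · have h1 : P.eval (fourier 1 x₀) ≠ 0 := by
      rw [Polynomial.eval_prod, Finset.prod_ne_zero_iff]
      intro x hx
      rw [Polynomial.eval_sub, Polynomial.eval_X, Polynomial.eval_C, sub_ne_zero]
      exact fun h => (Finset.ne_of_mem_erase hx) (fourier_one_injective h).symm
    have h2 : (fourier (-(Kc : ℤ)) x₀ : ℂ) ≠ 0 := by
      rw [fourier_apply]
      exact Circle.coe_ne_zero _
    exact (mul_eq_zero.mp hsum).resolve_right (mul_ne_zero h1 h2)
  · have h1 : P.eval (fourier 1 x) = 0 := by
      rw [Polynomial.eval_prod]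
      exact Finset.prod_eq_zero (Finset.mem_erase.mpr ⟨hne, hx⟩) (by simp)
    rw [h1, zero_mul, mul_zero]

/-! ### Complementary slackness -/

lemma apply_signedMoment_add_slack {Kc : ℕ} (f : (Fin (Kc + 1) → ℂ) →L[ℝ] ℝ)
    (w : SignedMeasure Circle2pi) :
    f (signedMoment Kc w)
      + (∫ t, (1 - f (momentCurve Kc t)) ∂w.toJordanDecomposition.posPart
        + ∫ t, (1 + f (momentCurve Kc t)) ∂w.toJordanDecomposition.negPart) = tvNorm w := by
  have hint : ∀ (μ : Measure Circle2pi) [IsFiniteMeasure μ],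
      Integrable (fun t => f (momentCurve Kc t)) μ := fun μ _ =>
    integrable_of_continuous (f.continuous.comp (continuous_momentCurve Kc)) μ
  rw [apply_signedMoment, tvNorm_eq, integral_sub (integrable_const _) (hint _),
    integral_add (integrable_const _) (hint _)]
  simp only [integral_const, smul_eq_mul, mul_one]
  ring

lemma apply_signedMoment_le_tvNorm {Kc : ℕ} {f : (Fin (Kc + 1) → ℂ) →L[ℝ] ℝ}
    (hf : ∀ t, |f (momentCurve Kc t)| ≤ 1) (w : SignedMeasure Circle2pi) :
    f (signedMoment Kc w) ≤ tvNorm w := by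
  rw [← apply_signedMoment_add_slack f w, le_add_iff_nonneg_right]
  exact add_nonneg (integral_nonneg fun t => sub_nonneg.mpr (abs_le.mp (hf t)).2)
    (integral_nonneg fun t => neg_le_iff_add_nonneg'.mp (abs_le.mp (hf t)).1)

lemma ae_eq_of_tvNorm_le {Kc : ℕ} {f : (Fin (Kc + 1) → ℂ) →L[ℝ] ℝ}
    (hf : ∀ t, |f (momentCurve Kc t)| ≤ 1) {w : SignedMeasure Circle2pi}
    (hw : tvNorm w ≤ f (signedMoment Kc w)) :
    (∀ᵐ t ∂w.toJordanDecomposition.posPart, f (momentCurve Kc t) = 1) ∧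
      ∀ᵐ t ∂w.toJordanDecomposition.negPart, f (momentCurve Kc t) = -1 := by
  have h1 : ∀ t, 0 ≤ 1 - f (momentCurve Kc t) := fun t => sub_nonneg.mpr (abs_le.mp (hf t)).2
  have h2 : ∀ t, 0 ≤ 1 + f (momentCurve Kc t) := fun t =>
    neg_le_iff_add_nonneg'.mp (abs_le.mp (hf t)).1
  have hcont := f.continuous.comp (continuous_momentCurve Kc)
  have hs := apply_signedMoment_add_slack f w
  have i1 : 0 ≤ ∫ t, (1 - f (momentCurve Kc t)) ∂w.toJordanDecomposition.posPart :=
    integral_nonneg h1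
  have i2 : 0 ≤ ∫ t, (1 + f (momentCurve Kc t)) ∂w.toJordanDecomposition.negPart :=
    integral_nonneg h2
  have z1 := (integral_eq_zero_iff_of_nonneg h1 (integrable_of_continuous
    (continuous_const.sub hcont) w.toJordanDecomposition.posPart)).mp (by linarith)
  have z2 := (integral_eq_zero_iff_of_nonneg h2 (integrable_of_continuous
    (continuous_const.add hcont) w.toJordanDecomposition.negPart)).mp (by linarith)
  constructor
  · filter_upwards [z1] with t ht
    simp only [Pi.zero_apply] at ht
    linarith
  · filter_upwards [z2] with t ht
    simp only [Pi.zero_apply] at ht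
    linarith

/-! ### Toeplitz matrices of positive measures -/

lemma posSemidef_Ty_of_measure {Kc : ℕ} {y : ℤ → ℂ} (μ : Measure Circle2pi) [IsFiniteMeasure μ]
    (hy : ∀ k : ℤ, |k| ≤ (Kc : ℤ) → y k = ∫ t, fourier (-k) t ∂μ) :
    (Ty Kc y).PosSemidef := by
  have hy' : ∀ i j : Fin (Kc + 1),
      y ((j : ℤ) - (i : ℤ)) = ∫ t, fourier (-((j : ℤ) - (i : ℤ))) t ∂μ := fun i j => by
    refine hy _ ?_
    have := i.2
    have := j.2
    rw [abs_le]
    omega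
  refine Matrix.PosSemidef.of_dotProduct_mulVec_nonneg ?_ fun x => ?_
  · ext i j
    rw [Matrix.conjTranspose_apply]
    simp only [Ty, Matrix.of_apply, RCLike.star_def]
    rw [hy', hy', ← integral_conj]
    refine integral_congr_ae (Filter.Eventually.of_forall fun t => ?_)
    simp only [← fourier_neg]
    congr 1
    ring_nf
  · let S : Circle2pi → ℂ := fun t => ∑ j : Fin (Kc + 1), x j * fourier (-(j : ℤ)) t
    have hS : star x ⬝ᵥ (Ty Kc y *ᵥ x) = ((∫ t, Complex.normSq (S t) ∂μ : ℝ) : ℂ) := by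
      have hexp : ∀ t, ((Complex.normSq (S t) : ℝ) : ℂ) = ∑ i : Fin (Kc + 1), ∑ j : Fin (Kc + 1),
          starRingEnd ℂ (x i) * x j * fourier (-((j : ℤ) - (i : ℤ))) t := fun t => by
        rw [Complex.normSq_eq_conj_mul_self, map_sum, Finset.sum_mul_sum]
        refine Finset.sum_congr rfl fun i _ => Finset.sum_congr rfl fun j _ => ?_
        rw [map_mul, ← fourier_neg, neg_neg, neg_sub, sub_eq_add_neg, fourier_add]
        ring
      rw [← integral_complex_ofReal]
      simp only [hexp]
      have hint : ∀ i j : Fin (Kc + 1), Integrable (fun t =>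
          starRingEnd ℂ (x i) * x j * fourier (-((j : ℤ) - (i : ℤ))) t) μ := fun i j =>
        (integrable_of_continuous (fourier _).continuous μ).const_mul _
      rw [integral_finsetSum _ fun i _ => integrable_finsetSum _ fun j _ => hint i j]
      simp only [dotProduct, Matrix.mulVec, Finset.mul_sum]
      refine Finset.sum_congr rfl fun i _ => ?_
      rw [integral_finsetSum _ fun j _ => hint i j]
      refine Finset.sum_congr rfl fun j _ => ?_
      rw [integral_const_mul, ← hy']
      simp only [Ty, Matrix.of_apply, Pi.star_apply, RCLike.star_def]
      ring
    rw [hS]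
    exact_mod_cast integral_nonneg fun t => Complex.normSq_nonneg (S t)

lemma negPart_ne_zero {Kc : ℕ} {y : ℤ → ℂ} {w : SignedMeasure Circle2pi}
    (hw : Feasible Kc y w) (hy : ¬ (Ty Kc y).PosSemidef) :
    w.toJordanDecomposition.negPart ≠ 0 := fun h =>
  hy <| posSemidef_Ty_of_measure w.toJordanDecomposition.posPart fun k hk => by
    rw [← hw k hk, sFourierCoeff, h, integral_zero_measure, sub_zero]

lemma posPart_ne_zero {Kc : ℕ} {y : ℤ → ℂ} {w : SignedMeasure Circle2pi}
    (hw : Feasible Kc y w) (hy : ¬ (-(Ty Kc y)).PosSemidef) :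
    w.toJordanDecomposition.posPart ≠ 0 := fun h => by
  have hneg : -(Ty Kc y) = Ty Kc (-y) := rfl
  rw [hneg] at hy
  refine hy <| posSemidef_Ty_of_measure w.toJordanDecomposition.negPart fun k hk => ?_
  rw [Pi.neg_apply, ← hw k hk, sFourierCoeff, h, integral_zero_measure, zero_sub, neg_neg]

/-! ### Measures with finite support -/

lemma integral_eq_sum_of_ae_mem {F : Type*} [NormedAddCommGroup F] [NormedSpace ℝ F]
    [CompleteSpace F] {μ : Measure Circle2pi} [IsFiniteMeasure μ] {X : Finset Circle2pi}
    (hX : ∀ᵐ t ∂μ, t ∈ X) (h : Circle2pi → F) :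
    ∫ t, h t ∂μ = ∑ x ∈ X, μ.real {x} • h x := by
  rw [← setIntegral_finset X IntegrableOn.finset, Measure.restrict_eq_self_of_ae_mem hX]

lemma exists_singleton_pos_of_ae_mem {μ : Measure Circle2pi} [IsFiniteMeasure μ] (hμ : μ ≠ 0)
    {X : Finset Circle2pi} (hX : ∀ᵐ t ∂μ, t ∈ X) : ∃ x ∈ X, 0 < μ.real {x} := by
  by_contra! hcon
  have h := integral_eq_sum_of_ae_mem hX fun _ => (1 : ℝ)
  rw [Finset.sum_eq_zero fun x hx => by
    rw [le_antisymm (hcon x hx) measureReal_nonneg, zero_smul]] at h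
  simp [measureReal_eq_zero_iff, hμ] at h

lemma signedMeasure_apply (w : SignedMeasure Circle2pi) {A : Set Circle2pi}
    (hA : MeasurableSet A) :
    w A = w.toJordanDecomposition.posPart.real A - w.toJordanDecomposition.negPart.real A :=
  w.apply_eq_posPart_real_sub_negPart_real hA

lemma sFourierCoeff_eq_sum {w : SignedMeasure Circle2pi} {X : Finset Circle2pi}
    (hpos : ∀ᵐ t ∂w.toJordanDecomposition.posPart, t ∈ X)
    (hneg : ∀ᵐ t ∂w.toJordanDecomposition.negPart, t ∈ X) (k : ℤ) :
    sFourierCoeff w k = ∑ x ∈ X, (w {x} : ℂ) * fourier (-k) x := by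
  rw [sFourierCoeff, integral_eq_sum_of_ae_mem hpos, integral_eq_sum_of_ae_mem hneg,
    ← Finset.sum_sub_distrib]
  refine Finset.sum_congr rfl fun x _ => ?_
  rw [signedMeasure_apply w (measurableSet_singleton x), ← sub_smul, Complex.real_smul]

lemma eq_sum_smul_diracSM {w : SignedMeasure Circle2pi} {X : Finset Circle2pi}
    (hpos : ∀ᵐ t ∂w.toJordanDecomposition.posPart, t ∈ X)
    (hneg : ∀ᵐ t ∂w.toJordanDecomposition.negPart, t ∈ X) :
    w = ∑ x ∈ X, w {x} • diracSM x := by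
  refine VectorMeasure.ext fun A hA => ?_
  have hreal : ∀ (μ : Measure Circle2pi) [IsFiniteMeasure μ], (∀ᵐ t ∂μ, t ∈ X) →
      μ.real A = ∑ x ∈ X, μ.real {x} * A.indicator 1 x := fun μ _ hμ => by
    rw [← integral_indicator_one hA, integral_eq_sum_of_ae_mem hμ]
    rfl
  have hsum : (∑ x ∈ X, w {x} • diracSM x) A = ∑ x ∈ X, w {x} * A.indicator 1 x := by
    rw [← FunLike.coeAddMonoidHom_apply, map_sum, Finset.sum_apply]
    refine Finset.sum_congr rfl fun x _ => ?_
    simp only [FunLike.coeAddMonoidHom_apply, _root_.smul_apply, smul_eq_mul,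
      diracSM, Measure.toSignedMeasure_apply_measurable hA]
    rw [← integral_indicator_one hA, integral_dirac]
  rw [hsum, signedMeasure_apply w hA, hreal _ hpos, hreal _ hneg, ← Finset.sum_sub_distrib]
  refine Finset.sum_congr rfl fun x _ => ?_
  rw [signedMeasure_apply w (measurableSet_singleton x), sub_mul]

/-- If `T_y` is neither positive semidefinite nor negative semidefinite (equivalently, it
has at least one positive and one negative eigenvalue), then (BPC) has a unique solution,
composed of at most `2 K_c` Dirac masses with at least one positive and one negative
weight. -/
theorem unique_sparse_solution_of_Ty_indefinite (Kc : ℕ) (hKc : 1 ≤ Kc) (y : ℤ → ℂ)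
    (hsym : ∀ k : ℤ, |k| ≤ (Kc : ℤ) → y (-k) = starRingEnd ℂ (y k))
    (hnpos : ¬ (Ty Kc y).PosSemidef) (hnneg : ¬ (-(Ty Kc y)).PosSemidef) :
    ∃ w' : MeasureTheory.SignedMeasure Circle2pi,
      IsBPCSolution Kc y w' ∧
      (∀ w : MeasureTheory.SignedMeasure Circle2pi, IsBPCSolution Kc y w → w = w') ∧
      ∃ (N : ℕ) (x : Fin N → Circle2pi) (a : Fin N → ℝ),
        1 ≤ N ∧ N ≤ 2 * Kc ∧ Function.Injective x ∧ (∀ i, a i ≠ 0) ∧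
        (∃ i, 0 < a i) ∧ (∃ j, a j < 0) ∧
        w' = ∑ i, a i • diracSM (x i) := by
  obtain ⟨f, hf, hmem⟩ := exists_dual_certificate hsym
  obtain ⟨w', hmom, htv⟩ := exists_tvNorm_le_of_mem_momentBall hmem
  have hfeas : Feasible Kc y w' := (feasible_iff_signedMoment hsym w').mpr hmom
  have hsol : IsBPCSolution Kc y w' := ⟨hfeas, fun v hv => by
    have h := apply_signedMoment_le_tvNorm hf v
    rw [(feasible_iff_signedMoment hsym v).mp hv] at h
    exact htv.trans h⟩
  have hslack : ∀ w, IsBPCSolution Kc y w →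
      (∀ᵐ t ∂w.toJordanDecomposition.posPart, f (momentCurve Kc t) = 1) ∧
        ∀ᵐ t ∂w.toJordanDecomposition.negPart, f (momentCurve Kc t) = -1 := fun w hw => by
    refine ae_eq_of_tvNorm_le hf ?_
    rw [(feasible_iff_signedMoment hsym w).mp hw.1]
    exact (hw.2 w' hfeas).trans htv
  have hpos_ne := posPart_ne_zero hfeas hnneg
  have hneg_ne := negPart_ne_zero hfeas hnpos
  obtain ⟨hfin, hcard⟩ := (constant_or_ncard_contact_le hf).resolve_left fun ⟨c, hc⟩ => by
    obtain ⟨h1, h2⟩ := hslack w' hsol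
    have := ae_neBot.mpr hpos_ne
    have := ae_neBot.mpr hneg_ne
    obtain ⟨t, ht⟩ := h1.exists
    obtain ⟨s, hs⟩ := h2.exists
    rw [hc] at ht hs
    linarith
  let X : Finset Circle2pi := hfin.toFinset
  have hXcard : X.card ≤ 2 * Kc := by rwa [← Set.ncard_eq_toFinset_card _ hfin]
  have hsupp : ∀ w, IsBPCSolution Kc y w →
      (∀ᵐ t ∂w.toJordanDecomposition.posPart, t ∈ X) ∧
        ∀ᵐ t ∂w.toJordanDecomposition.negPart, t ∈ X := fun w hw => by
    obtain ⟨h1, h2⟩ := hslack w hw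
    refine ⟨h1.mono fun t ht => ?_, h2.mono fun t ht => ?_⟩ <;> simp [X, ht]
  have hrep : ∀ w, IsBPCSolution Kc y w → w = ∑ x ∈ X, w {x} • diracSM x := fun w hw =>
    eq_sum_smul_diracSM (hsupp w hw).1 (hsupp w hw).2
  refine ⟨w', hsol, fun w hw => ?_, ?_⟩
  · have hd := eq_zero_of_sum_mul_fourier_eq_zero hXcard
      (d := fun x => (w {x} : ℂ) - (w' {x} : ℂ)) fun k hk => by
        have hk' : |-k| ≤ (Kc : ℤ) := by rwa [abs_neg]
        have h1 := sFourierCoeff_eq_sum (hsupp w hw).1 (hsupp w hw).2 (-k)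
        have h2 := sFourierCoeff_eq_sum (hsupp w' hsol).1 (hsupp w' hsol).2 (-k)
        rw [hw.1 _ hk', neg_neg] at h1
        rw [hfeas _ hk', neg_neg] at h2
        simp only [sub_mul, Finset.sum_sub_distrib]
        rw [← h1, ← h2, sub_self]
    rw [hrep w hw, hrep w' hsol]
    refine Finset.sum_congr rfl fun x hx => ?_
    have h : w {x} = w' {x} := by exact_mod_cast sub_eq_zero.mp (hd x hx)
    rw [h]
  · obtain ⟨hs1, hs2⟩ := hslack w' hsol
    have hnull_neg : ∀ x, f (momentCurve Kc x) = 1 →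
        w'.toJordanDecomposition.negPart.real {x} = 0 := fun x hx => by
      rw [measureReal_eq_zero_iff]
      refine measure_mono_null (Set.singleton_subset_iff.mpr ?_) hs2
      intro h
      simp only [Set.mem_ofPred_eq, hx] at h
      norm_num at h
    have hnull_pos : ∀ x, f (momentCurve Kc x) = -1 →
        w'.toJordanDecomposition.posPart.real {x} = 0 := fun x hx => by
      rw [measureReal_eq_zero_iff]
      refine measure_mono_null (Set.singleton_subset_iff.mpr ?_) hs1
      intro h
      simp only [Set.mem_ofPred_eq, hx] at h
      norm_num at h
    have hcontact : ∀ x ∈ X, f (momentCurve Kc x) = 1 ∨ f (momentCurve Kc x) = -1 :=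
      fun x hx => eq_or_eq_neg_of_abs_eq (by simpa [X] using hx)
    have hposAtom : ∃ x ∈ X, 0 < w' {x} := by
      obtain ⟨x, hx, hlt⟩ := exists_singleton_pos_of_ae_mem hpos_ne (hsupp w' hsol).1
      refine ⟨x, hx, ?_⟩
      rw [signedMeasure_apply w' (measurableSet_singleton x)]
      rcases hcontact x hx with h | h
      · rwa [hnull_neg x h, sub_zero]
      · exact absurd (hnull_pos x h) hlt.ne'
    have hnegAtom : ∃ x ∈ X, w' {x} < 0 := by
      obtain ⟨x, hx, hlt⟩ := exists_singleton_pos_of_ae_mem hneg_ne (hsupp w' hsol).2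
      refine ⟨x, hx, ?_⟩
      rw [signedMeasure_apply w' (measurableSet_singleton x)]
      rcases hcontact x hx with h | h
      · exact absurd (hnull_neg x h) hlt.ne'
      · rwa [hnull_pos x h, zero_sub, neg_lt_zero]
    let X' : Finset Circle2pi := X.filter fun x => w' {x} ≠ 0
    let e := X'.equivFin
    obtain ⟨xp, hxp, hxp_pos⟩ := hposAtom
    obtain ⟨xn, hxn, hxn_neg⟩ := hnegAtom
    have hxp' : xp ∈ X' := Finset.mem_filter.mpr ⟨hxp, hxp_pos.ne'⟩
    have hxn' : xn ∈ X' := Finset.mem_filter.mpr ⟨hxn, hxn_neg.ne⟩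
    refine ⟨X'.card, fun i => e.symm i, fun i => w' {(e.symm i : Circle2pi)},
      Finset.card_pos.mpr ⟨xp, hxp'⟩, (Finset.card_le_card (X.filter_subset _)).trans hXcard,
      Subtype.val_injective.comp e.symm.injective,
      fun i => (Finset.mem_filter.mp (e.symm i).2).2, ⟨e ⟨xp, hxp'⟩, by simpa using hxp_pos⟩,
      ⟨e ⟨xn, hxn'⟩, by simpa using hxn_neg⟩, ?_⟩
    rw [Equiv.sum_comp e.symm fun x : X' => w' {(x : Circle2pi)} • diracSM x,
      Finset.sum_coe_sort X' fun x => w' {x} • diracSM x]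
    refine (hrep w' hsol).trans (Finset.sum_filter_of_ne fun x _ h => ?_).symm
    exact fun h0 => h (by rw [h0, zero_smul])
end
end

section
/- If the Hermitian Toeplitz matrix T_y is positive definite, then the set of solutions of (BPC) of the form Σ_{i=1}^{K_c+1} a_i δ_{x_i} with strictly positive weights a_i and pairwise distinct x_i ∈ 𝕋 is uncountable; in fact, for every t ∈ 𝕋 there exists such a solution having t among its atoms. -/
open MeasureTheory Complex Real Matrix
open scoped Real ComplexOrder

noncomputable section

theorem LinearIsometry.norm_eq_one_of_apply_eq_smul {E : Type*} [NormedAddCommGroup E]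
    [InnerProductSpace ℂ E] (U : E →ₗᵢ[ℂ] E) {v : E} {μ : ℂ} (hv : v ≠ 0) (h : U v = μ • v) :
    ‖μ‖ = 1 := by
  have h1 := U.norm_map v
  rw [h, norm_smul] at h1
  exact mul_right_cancel₀ (norm_ne_zero_iff.mpr hv) (by rw [h1, one_mul])

/-- An isometry of a finite-dimensional complex inner product space has an orthonormal basis of
eigenvectors. -/
theorem LinearIsometry.exists_orthonormalBasis_apply_eq_smul {E : Type*} [NormedAddCommGroup E]
    [InnerProductSpace ℂ E] [FiniteDimensional ℂ E] (U : E →ₗᵢ[ℂ] E) {n : ℕ}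
    (hn : Module.finrank ℂ E = n) :
    ∃ (b : OrthonormalBasis (Fin n) ℂ E) (μ : Fin n → ℂ), ∀ i, U (b i) = μ i • b i := by
  classical
  let T : Module.End ℂ E := U.toLinearMap
  let V : Module.End.Eigenvalues T → Submodule ℂ E := fun μ => Module.End.eigenspace T μ
  have hmem : ∀ {v : E} {μ : ℂ}, v ∈ Module.End.eigenspace T μ ↔ U v = μ • v :=
    Module.End.mem_eigenspace_iff
  have hself : ∀ {μ : ℂ}, ‖μ‖ = 1 → (starRingEnd ℂ) μ * μ = 1 := fun h => by
    rw [Complex.conj_mul', h]; norm_num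
  have horth : OrthogonalFamily ℂ (fun i => V i) fun i => (V i).subtypeₗᵢ := by
    rintro μ ν hne ⟨x, hx⟩ ⟨y, hy⟩
    change inner ℂ x y = 0
    by_contra h0
    have hx0 : x ≠ 0 := by rintro rfl; simp at h0
    have hμ := U.norm_eq_one_of_apply_eq_smul hx0 (hmem.mp hx)
    have h1 := U.inner_map_map x y
    rw [hmem.mp hx, hmem.mp hy, inner_smul_left, inner_smul_right, ← mul_assoc] at h1
    have h2 : (starRingEnd ℂ) (μ : ℂ) * (ν : ℂ) = 1 :=
      mul_right_cancel₀ h0 (by rw [h1, one_mul])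
    have h3 : (μ : ℂ) = ν := by
      have h4 : (starRingEnd ℂ) (μ : ℂ) ≠ 0 := left_ne_zero_of_mul_eq_one h2
      exact mul_left_cancel₀ h4 ((hself hμ).trans h2.symm)
    exact hne (Subtype.ext h3)
  have hinv : ∀ x ∈ (iSup V)ᗮ, T x ∈ (iSup V)ᗮ := by
    intro x hx
    rw [← Submodule.iInf_orthogonal, Submodule.mem_iInf] at hx ⊢
    intro μ
    rw [Submodule.mem_orthogonal]
    intro v hv
    by_cases hv0 : v = 0
    · simp [hv0]
    have hμ := U.norm_eq_one_of_apply_eq_smul hv0 (hmem.mp hv)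
    have h1 := U.inner_map_map v x
    rw [hmem.mp hv, inner_smul_left, (Submodule.mem_orthogonal _ _).mp (hx μ) v hv] at h1
    exact (mul_eq_zero.mp h1).resolve_left (left_ne_zero_of_mul_eq_one (hself hμ))
  have hbot : (iSup V)ᗮ = ⊥ := by
    by_contra hne
    have : Nontrivial ↥(iSup V)ᗮ := Submodule.nontrivial_iff_ne_bot.mpr hne
    obtain ⟨c, hc⟩ := Module.End.exists_eigenvalue (T.restrict hinv)
    obtain ⟨⟨x, hx⟩, hxe, hx0⟩ := hc.exists_hasEigenvector
    have hxc : T x = c • x := congrArg Subtype.val (Module.End.mem_eigenspace_iff.mp hxe)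
    have hx0' : x ≠ 0 := fun h => hx0 (Subtype.ext h)
    have hce : T.HasEigenvalue c :=
      Module.End.hasEigenvalue_of_hasEigenvector ⟨hmem.mpr hxc, hx0'⟩
    have hxV : x ∈ iSup V := Submodule.mem_iSup_of_mem (p := V) ⟨c, hce⟩ (hmem.mpr hxc)
    exact hx0' (inner_self_eq_zero.mp ((Submodule.mem_orthogonal _ _).mp hx x hxV))
  have hint := horth.isInternal_iff.mpr hbot
  exact ⟨hint.subordinateOrthonormalBasis hn horth,
    fun i => (hint.subordinateOrthonormalBasisIndex hn i horth).val,
    fun i => hmem.mp (hint.subordinateOrthonormalBasis_subordinate hn i horth)⟩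

/-- A positive definite matrix is the Gram matrix of some vectors. -/
theorem Matrix.PosDef.exists_gram_eq {n : Type*} [Fintype n]
    {T : Matrix n n ℂ} (hT : T.PosDef) :
    ∃ e : n → EuclideanSpace ℂ n, Matrix.gram ℂ e = T := by
  classical
  open scoped MatrixOrder Matrix.Norms.L2Operator in
  obtain ⟨A, rfl⟩ := CStarAlgebra.nonneg_iff_eq_star_mul_self.mp hT.posSemidef.nonneg
  refine ⟨fun j => WithLp.toLp 2 (fun i => A i j), ?_⟩
  ext i j
  simp [Matrix.gram_apply, PiLp.inner_apply, Matrix.mul_apply, Matrix.star_apply, mul_comm]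

/-- Linearly independent vectors whose Gram matrix is invariant under the shift are the orbit of a
vector under an isometry having any prescribed unimodular eigenvalue. -/
theorem exists_linearIsometry_shift {E : Type*} [NormedAddCommGroup E]
    [InnerProductSpace ℂ E] [FiniteDimensional ℂ E] {K : ℕ}
    (hn : Module.finrank ℂ E = K + 1) {e : Fin (K + 1) → E} (he : LinearIndependent ℂ e)
    (hshift : ∀ i j : Fin K, inner ℂ (e i.succ) (e j.succ) = inner ℂ (e i.castSucc) (e j.castSucc))
    {z : ℂ} (hz : ‖z‖ = 1) :
    ∃ (U : E →ₗᵢ[ℂ] E) (p : E), p ≠ 0 ∧ U p = z • p ∧ ∀ i : Fin K, U (e i.castSucc) = e i.succ := by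
  have hz0 : z ≠ 0 := by rintro rfl; simp at hz
  have hzz : (starRingEnd ℂ) z * z = 1 := by rw [Complex.conj_mul', hz]; norm_num
  obtain ⟨p, hp, hp0⟩ : ∃ p ∈ (Submodule.span ℂ (Set.range
      fun i : Fin K => e i.succ - z • e i.castSucc))ᗮ, p ≠ 0 := by
    apply Submodule.exists_mem_ne_zero_of_ne_bot
    intro h
    rw [Submodule.orthogonal_eq_bot_iff] at h
    have h1 := finrank_range_le_card (R := ℂ) (fun i : Fin K => e i.succ - z • e i.castSucc)
    rw [Set.finrank, h, finrank_top, hn, Fintype.card_fin] at h1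
    omega
  have hpe : ∀ i : Fin K, inner ℂ p (e i.succ) = z * inner ℂ p (e i.castSucc) := fun i => by
    have := (Submodule.mem_orthogonal' _ _).mp hp _ (Submodule.subset_span ⟨i, rfl⟩)
    rwa [inner_sub_right, inner_smul_right, sub_eq_zero] at this
  have hnot : p ∉ Submodule.span ℂ (Set.range fun i : Fin K => e i.castSucc) := by
    intro hps
    obtain ⟨c, hc⟩ := (Submodule.mem_span_range_iff_exists_fun ℂ).mp hps
    set q := ∑ i, c i • e i.succ with hq
    have hqq : inner ℂ q q = inner ℂ p p := by
      rw [hq, ← hc]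
      simp_rw [sum_inner, inner_sum, inner_smul_left, inner_smul_right, hshift]
    have hpq : inner ℂ p q = z * inner ℂ p p := by
      calc inner ℂ p q = z * inner ℂ p (∑ i, c i • e i.castSucc) := by
            simp_rw [hq, inner_sum, inner_smul_right, hpe, Finset.mul_sum]
            exact Finset.sum_congr rfl fun i _ => by ring
        _ = z * inner ℂ p p := by rw [hc]
    have hqp : inner ℂ q p = (starRingEnd ℂ) z * inner ℂ p p := by
      rw [← inner_conj_symm, hpq, map_mul, inner_conj_symm]
    have hqz : q - z • p = 0 := by
      rw [← inner_self_eq_zero (𝕜 := ℂ), inner_sub_sub_self, inner_smul_left, inner_smul_left,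
        inner_smul_right, inner_smul_right, hqq, hpq, hqp]
      linear_combination (-inner ℂ p p) * hzz
    have hcoef : ∀ j : Fin (K + 1), (Fin.cons 0 c : Fin (K + 1) → ℂ) j
        - z * (Fin.snoc c 0 : Fin (K + 1) → ℂ) j = 0 := by
      refine Fintype.linearIndependent_iff.mp he _ ?_
      rw [← hqz, hq, ← hc]
      simp_rw [sub_smul, Finset.sum_sub_distrib]
      rw [Fin.sum_univ_succ, Fin.sum_univ_castSucc (fun j => (z * _) • e j)]
      simp [Finset.smul_sum, smul_smul]
    have hc0 : ∀ (m : ℕ) (hm : m < K), c ⟨m, hm⟩ = 0 := by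
      intro m
      induction m with
      | zero =>
        intro hm
        have := hcoef (Fin.castSucc ⟨0, hm⟩)
        rw [Fin.snoc_castSucc, show Fin.castSucc (⟨0, hm⟩ : Fin K) = 0 from rfl,
          Fin.cons_zero] at this
        simpa [hz0] using this
      | succ m ih =>
        intro hm
        have := hcoef (Fin.castSucc ⟨m + 1, hm⟩)
        rw [Fin.snoc_castSucc, show Fin.castSucc (⟨m + 1, hm⟩ : Fin K)
          = Fin.succ ⟨m, by omega⟩ from rfl, Fin.cons_succ, ih] at this
        simpa [hz0] using this
    exact hp0 (by rw [← hc]; exact Finset.sum_eq_zero fun i _ => by rw [hc0 i i.2, zero_smul])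
  have hli : LinearIndependent ℂ (Fin.cons p (fun i : Fin K => e i.castSucc) : Fin (K + 1) → E) :=
    linearIndependent_finCons.mpr ⟨he.comp _ (Fin.castSucc_injective K), hnot⟩
  let B := basisOfLinearIndependentOfCardEqFinrank hli (by simp [hn])
  have hB : ⇑B = Fin.cons p (fun i : Fin K => e i.castSucc) :=
    coe_basisOfLinearIndependentOfCardEqFinrank _ _
  let F : E →ₗ[ℂ] E := B.constr ℂ (Fin.cons (z • p) (fun i : Fin K => e i.succ) : Fin (K + 1) → E)
  have hF0 : F p = z • p := by
    have := B.constr_basis ℂ (Fin.cons (z • p) (fun i : Fin K => e i.succ) : Fin (K + 1) → E) 0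
    rwa [hB] at this
  have hFs : ∀ i : Fin K, F (e i.castSucc) = e i.succ := fun i => by
    have := B.constr_basis ℂ
      (Fin.cons (z • p) (fun i : Fin K => e i.succ) : Fin (K + 1) → E) i.succ
    rwa [hB] at this
  have hep : ∀ i : Fin K, z * inner ℂ (e i.succ) p = inner ℂ (e i.castSucc) p := fun i => by
    rw [← inner_conj_symm, hpe, map_mul, inner_conj_symm, ← mul_assoc, mul_comm z, hzz, one_mul]
  have hFB : ∀ i j, inner ℂ (F (B i)) (F (B j)) = inner ℂ (B i) (B j) := by
    intro i j
    rw [hB]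
    refine Fin.cases ?_ (fun i => ?_) i <;> refine Fin.cases ?_ (fun j => ?_) j <;>
      simp only [Fin.cons_zero, Fin.cons_succ, hF0, hFs, inner_smul_left, inner_smul_right]
    · rw [← mul_assoc, mul_comm z, hzz, one_mul]
    · rw [hpe, ← mul_assoc, hzz, one_mul]
    · exact hep i
    · exact hshift i j
  have hF : ∀ x y, inner ℂ (F x) (F y) = inner ℂ x y := by
    intro x y
    rw [← B.sum_repr x, ← B.sum_repr y]
    simp_rw [map_sum, map_smul, sum_inner, inner_sum, inner_smul_left, inner_smul_right, hFB]
  exact ⟨F.isometryOfInner hF, p, hp0, hF0, hFs⟩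

/-- **Carathéodory–Toeplitz decomposition** with a prescribed node: a positive definite Toeplitz
matrix of size `K + 1` is a positive combination of `K + 1` rank-one Toeplitz matrices with distinct
unimodular nodes, one of which can be any given unimodular number. -/
theorem exists_nodes_of_Ty_posDef {K : ℕ} {y : ℤ → ℂ} (hpd : (Ty K y).PosDef) {z : ℂ}
    (hz : ‖z‖ = 1) :
    ∃ (a : Fin (K + 1) → ℝ) (μ : Fin (K + 1) → ℂ), (∀ l, 0 < a l) ∧ Function.Injective μ ∧
      (∀ l, ‖μ l‖ = 1) ∧ (∃ l, μ l = z) ∧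
      ∀ i j : Fin (K + 1), y ((j : ℤ) - (i : ℤ)) =
        ∑ l, (a l : ℂ) * ((starRingEnd ℂ) (μ l) ^ (i : ℕ) * μ l ^ (j : ℕ)) := by
  obtain ⟨e, he⟩ := hpd.exists_gram_eq
  have hli : LinearIndependent ℂ e := linearIndependent_of_posDef_gram (he ▸ hpd)
  have hgram : ∀ i j, inner ℂ (e i) (e j) = y ((j : ℤ) - (i : ℤ)) := fun i j =>
    congrFun (congrFun he i) j
  have hfin : Module.finrank ℂ (EuclideanSpace ℂ (Fin (K + 1))) = K + 1 := by simp
  obtain ⟨U, p, hp0, hUp, hU⟩ := exists_linearIsometry_shift hfin hli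
    (fun i j => by rw [hgram, hgram]; congr 1; push_cast [Fin.val_succ, Fin.val_castSucc]; ring) hz
  obtain ⟨b, μ, hb⟩ := U.exists_orthonormalBasis_apply_eq_smul hfin
  have hb0 : ∀ l, b l ≠ 0 := fun l => b.orthonormal.ne_zero l
  have hμ : ∀ l, ‖μ l‖ = 1 := fun l => U.norm_eq_one_of_apply_eq_smul (hb0 l) (hb l)
  have hμc : ∀ l, (starRingEnd ℂ) (μ l) * μ l = 1 := fun l => by
    rw [Complex.conj_mul', hμ l]; norm_num
  -- the coordinates of an orbit vector in the eigenbasis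
  have hstep : ∀ l (x : EuclideanSpace ℂ (Fin (K + 1))),
      inner ℂ (b l) (U x) = μ l * inner ℂ (b l) x := fun l x => by
    have h1 := U.inner_map_map (b l) x
    rw [hb, inner_smul_left] at h1
    rw [← h1, ← mul_assoc, mul_comm (μ l), hμc, one_mul]
  have hcoord : ∀ l (j : Fin (K + 1)),
      inner ℂ (b l) (e j) = μ l ^ (j : ℕ) * inner ℂ (b l) (e 0) := by
    intro l j
    induction j using Fin.induction with
    | zero => simp
    | succ i ih =>
      rw [← hU, hstep, ih, Fin.val_succ, Fin.val_castSucc, pow_succ]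
      ring
  have hcoord' : ∀ l (j : Fin (K + 1)), inner ℂ (e j) (b l) =
      (starRingEnd ℂ) (μ l) ^ (j : ℕ) * inner ℂ (e 0) (b l) := fun l j => by
    rw [← inner_conj_symm, hcoord, map_mul, inner_conj_symm, map_pow]
  -- the first orbit vector is cyclic
  have hspan : ∀ v : EuclideanSpace ℂ (Fin (K + 1)), (∀ j, inner ℂ (e j) v = 0) → v = 0 := by
    intro v hv
    have htop : Submodule.span ℂ (Set.range e) = ⊤ :=
      hli.span_eq_top_of_card_eq_finrank (by simp)
    have hmem : v ∈ (Submodule.span ℂ (Set.range e))ᗮ := by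
      rw [Submodule.mem_orthogonal]
      intro u hu
      induction hu using Submodule.span_induction with
      | mem u hu => obtain ⟨j, rfl⟩ := hu; exact hv j
      | zero => simp
      | add u w _ _ hu hw => rw [inner_add_left, hu, hw, add_zero]
      | smul c u _ hu => rw [inner_smul_left, hu, mul_zero]
    rwa [htop, Submodule.top_orthogonal_eq_bot, Submodule.mem_bot] at hmem
  have hne : ∀ l, inner ℂ (e 0) (b l) ≠ 0 := fun l h0 =>
    hb0 l (hspan _ fun j => by rw [hcoord', h0, mul_zero])
  refine ⟨fun l => ‖inner ℂ (e 0) (b l)‖ ^ 2, μ, fun l => by have := hne l; positivity,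
    ?_, hμ, ?_, ?_⟩
  · intro l m hlm
    by_contra hlm'
    have hv : inner ℂ (e 0) (b m) • b l - inner ℂ (e 0) (b l) • b m = 0 := by
      refine hspan _ fun j => ?_
      rw [inner_sub_right, inner_smul_right, inner_smul_right, hcoord' l j, hcoord' m j, hlm]
      ring
    have h1 := congrArg (inner ℂ (b l)) hv
    rw [inner_sub_right, inner_smul_right, inner_smul_right, b.inner_eq_zero hlm',
      b.inner_eq_one, inner_zero_right] at h1
    exact hne m (by simpa using h1)
  · obtain ⟨l, hl⟩ : ∃ l, inner ℂ (b l) p ≠ 0 := by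
      by_contra! h
      exact hp0 (by rw [← b.sum_repr' p]; simp [h])
    refine ⟨l, mul_right_cancel₀ hl ?_⟩
    rw [← hstep, hUp, inner_smul_right]
  · intro i j
    rw [← hgram, ← b.sum_inner_mul_inner]
    refine Finset.sum_congr rfl fun l _ => ?_
    rw [hcoord, hcoord', ← inner_conj_symm (b l) (e 0)]
    push_cast
    rw [← Complex.mul_conj']
    ring

/-- The Jordan decomposition of a positive measure. -/
theorem toJordanDecomposition_toSignedMeasure_of_measure {α : Type*} [MeasurableSpace α]
    (μ : Measure α) [IsFiniteMeasure μ] :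
    μ.toSignedMeasure.toJordanDecomposition =
      { posPart := μ, negPart := 0, mutuallySingular := Measure.MutuallySingular.zero_right } := by
  apply SignedMeasure.toJordanDecomposition_eq
  simp [JordanDecomposition.toSignedMeasure]

theorem sum_smul_diracSM_apply {ι : Type*} [Fintype ι] (x : ι → Circle2pi) (a : ι → ℝ)
    {s : Set Circle2pi} (hs : MeasurableSet s) :
    (∑ i, a i • diracSM (x i)) s = ∑ i, a i * s.indicator 1 (x i) := by
  have h : ∀ i, (s.indicator (1 : Circle2pi → ENNReal) (x i)).toReal = s.indicator 1 (x i) :=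
    fun i => by by_cases hi : x i ∈ s <;> simp [hi]
  simp [diracSM, measureReal_def, hs, h]

theorem sum_smul_diracSM_eq_toSignedMeasure {ι : Type*} [Fintype ι] (x : ι → Circle2pi)
    {a : ι → ℝ} (ha : ∀ i, 0 ≤ a i) :
    ∃ (μ : Measure Circle2pi) (_ : IsFiniteMeasure μ),
      μ = ∑ i, (a i).toNNReal • Measure.dirac (x i) ∧
      ∑ i, a i • diracSM (x i) = μ.toSignedMeasure := by
  refine ⟨_, inferInstance, rfl, ?_⟩
  ext s hs
  rw [sum_smul_diracSM_apply x a hs, Measure.toSignedMeasure_apply_measurable hs, measureReal_def,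
    Measure.finsetSum_apply, ENNReal.toReal_sum fun i _ => measure_ne_top _ _]
  refine Finset.sum_congr rfl fun i _ => ?_
  rw [Measure.smul_apply, ENNReal.smul_def, Measure.dirac_apply' _ hs]
  by_cases hi : x i ∈ s <;> simp [hi, ha i]

theorem sFourierCoeff_sum_smul_diracSM {ι : Type*} [Fintype ι] (x : ι → Circle2pi)
    {a : ι → ℝ} (ha : ∀ i, 0 ≤ a i) (k : ℤ) :
    sFourierCoeff (∑ i, a i • diracSM (x i)) k = ∑ i, (a i : ℂ) * fourier (-k) (x i) := by
  obtain ⟨μ, _, hμ, h⟩ := sum_smul_diracSM_eq_toSignedMeasure x ha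
  rw [h, sFourierCoeff, toJordanDecomposition_toSignedMeasure_of_measure]
  simp only [integral_zero_measure, sub_zero]
  rw [hμ, integral_finsetSum_measure]
  · refine Finset.sum_congr rfl fun i _ => ?_
    rw [integral_smul_nnreal_measure, integral_dirac, NNReal.smul_def, Real.coe_toNNReal _ (ha i),
      Complex.real_smul]
  · intro i _
    exact ((fourier (-k)).continuous.integrable_of_hasCompactSupport
      (HasCompactSupport.of_compactSpace _)).smul_measure_nnreal

theorem sFourierCoeff_zero (w : SignedMeasure Circle2pi) :
    sFourierCoeff w 0 = ((w Set.univ : ℝ) : ℂ) := by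
  rw [sFourierCoeff, w.apply_eq_posPart_real_sub_negPart_real MeasurableSet.univ]
  simp

theorem apply_univ_le_tvNorm (w : SignedMeasure Circle2pi) : w Set.univ ≤ tvNorm w := by
  rw [tvNorm, w.apply_eq_posPart_real_sub_negPart_real MeasurableSet.univ,
    SignedMeasure.totalVariation, Measure.add_apply, ENNReal.toReal_add (by simp) (by simp)]
  have h1 : 0 ≤ w.toJordanDecomposition.negPart.real Set.univ := measureReal_nonneg
  simp only [measureReal_def] at *
  linarith

theorem tvNorm_toSignedMeasure (μ : Measure Circle2pi) [IsFiniteMeasure μ] :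
    tvNorm μ.toSignedMeasure = μ.toSignedMeasure Set.univ := by
  rw [tvNorm, SignedMeasure.totalVariation, toJordanDecomposition_toSignedMeasure_of_measure,
    Measure.toSignedMeasure_apply_measurable MeasurableSet.univ]
  simp [measureReal_def]

/-- A feasible nonnegative discrete measure solves (BPC). -/
theorem isBPCSolution_of_nonneg {K : ℕ} {y : ℤ → ℂ} {ι : Type*} [Fintype ι] (x : ι → Circle2pi)
    {a : ι → ℝ} (ha : ∀ i, 0 ≤ a i) (hf : Feasible K y (∑ i, a i • diracSM (x i))) :
    IsBPCSolution K y (∑ i, a i • diracSM (x i)) := by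
  refine ⟨hf, fun v hv => ?_⟩
  have h0 := (hf 0 (by simp)).trans (hv 0 (by simp)).symm
  rw [sFourierCoeff_zero, sFourierCoeff_zero, Complex.ofReal_inj] at h0
  obtain ⟨μ, _, -, h⟩ := sum_smul_diracSM_eq_toSignedMeasure x ha
  rw [h] at h0 ⊢
  rw [tvNorm_toSignedMeasure, h0]
  exact apply_univ_le_tvNorm v

/-- Every point of the circle is an atom of some solution with `K + 1` positive Dirac masses. -/
theorem exists_solution_through {K : ℕ} {y : ℤ → ℂ} (hpd : (Ty K y).PosDef) (t : Circle2pi) :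
    ∃ (w : SignedMeasure Circle2pi) (x : Fin (K + 1) → Circle2pi) (a : Fin (K + 1) → ℝ),
      IsBPCSolution K y w ∧ Function.Injective x ∧ (∀ i, 0 < a i) ∧
        (∃ i, x i = t) ∧ w = ∑ i, a i • diracSM (x i) := by
  have hfour : ∀ (k : ℤ) (s : Circle2pi),
      fourier k s = (AddCircle.toCircle s : ℂ) ^ k := fun k s => by
    rw [fourier_apply, AddCircle.toCircle_zsmul, Circle.coe_zpow]
  obtain ⟨a, μ, ha, hinj, hμ, ⟨l, hl⟩, hy⟩ :=
    exists_nodes_of_Ty_posDef hpd (z := (AddCircle.toCircle t : ℂ)⁻¹)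
      (by rw [norm_inv, Circle.norm_coe, inv_one])
  have hμ0 : ∀ i, μ i ≠ 0 := fun i h => by simpa [h] using hμ i
  have hT : 2 * π ≠ 0 := by positivity
  choose x hx using fun i => (AddCircle.homeomorphCircle hT).surjective
    (⟨(μ i)⁻¹, by simp [Submonoid.unitSphere, hμ i]⟩ : Circle)
  have hx' : ∀ i, (AddCircle.toCircle (x i) : ℂ) = (μ i)⁻¹ := fun i => by
    rw [← AddCircle.homeomorphCircle_apply hT, hx]
  refine ⟨_, x, a, isBPCSolution_of_nonneg x (fun i => (ha i).le) ?_, ?_, ha, ⟨l, ?_⟩, rfl⟩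
  · intro k hk
    rw [sFourierCoeff_sum_smul_diracSM x fun i => (ha i).le]
    have hk' := abs_le.mp hk
    have hkey := hy ⟨(-k).toNat, by omega⟩ ⟨k.toNat, by omega⟩
    rw [show ((k.toNat : ℕ) : ℤ) - (((-k).toNat : ℕ) : ℤ) = k by omega] at hkey
    rw [hkey]
    refine Finset.sum_congr rfl fun i _ => ?_
    rw [hfour, hx', ← Complex.inv_eq_conj (hμ i), _root_.inv_zpow', neg_neg,
      ← zpow_natCast, ← zpow_natCast, _root_.inv_zpow', ← zpow_add₀ (hμ0 i)]
    congr 2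
    dsimp only
    omega
  · intro i j hij
    apply hinj
    rw [← _root_.inv_inj, ← hx', ← hx', hij]
  · apply AddCircle.injective_toCircle hT
    apply Subtype.ext
    rw [hx', hl, inv_inv]

theorem sum_smul_diracSM_singleton_pos {ι : Type*} [Fintype ι] (x : ι → Circle2pi) {a : ι → ℝ}
    (ha : ∀ i, 0 < a i) (i : ι) : 0 < (∑ j, a j • diracSM (x j)) {x i} := by
  rw [sum_smul_diracSM_apply _ _ (measurableSet_singleton _)]
  refine Finset.sum_pos' (fun j _ => mul_nonneg (ha j).le (Set.indicator_nonneg (by simp) _))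
    ⟨i, Finset.mem_univ i, by simpa using ha i⟩

theorem mem_range_of_sum_smul_diracSM_singleton_ne_zero {ι : Type*} [Fintype ι]
    {x : ι → Circle2pi} {a : ι → ℝ} {t : Circle2pi}
    (h : (∑ j, a j • diracSM (x j)) {t} ≠ 0) : t ∈ Set.range x := by
  rw [sum_smul_diracSM_apply _ _ (measurableSet_singleton _)] at h
  obtain ⟨i, -, hi⟩ := Finset.exists_ne_zero_of_sum_ne_zero h
  exact ⟨i, Set.mem_singleton_iff.mp (Set.mem_of_indicator_ne_zero (right_ne_zero_of_mul hi))⟩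

theorem not_countable_univ_circle2pi : ¬ (Set.univ : Set Circle2pi).Countable := by
  intro h
  have : Countable Circle2pi := Set.countable_univ_iff.mp h
  have h1 : (Set.Ico (0 : ℝ) (0 + 2 * π)).Countable :=
    (AddCircle.equivIco (2 * π) 0).symm.injective.countable
  have h2 := Cardinal.mk_le_aleph0_iff.mpr h1
  rw [Cardinal.mk_Ico_real (by positivity)] at h2
  exact Cardinal.aleph0_lt_continuum.not_ge h2

/-- If `T_y` is positive definite, then the set of solutions of (BPC) consisting of
`K_c + 1` Dirac masses with strictly positive weights at pairwise distinct points is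
uncountable; in fact, for every `t ∈ 𝕋` there is such a solution having `t` among its
atoms. -/
theorem uncountably_many_solutions_of_Ty_posDef (Kc : ℕ) (hKc : 1 ≤ Kc) (y : ℤ → ℂ)
    (hsym : ∀ k : ℤ, |k| ≤ (Kc : ℤ) → y (-k) = starRingEnd ℂ (y k))
    (hpd : (Ty Kc y).PosDef) :
    ¬ Set.Countable {w : MeasureTheory.SignedMeasure Circle2pi |
        IsBPCSolution Kc y w ∧
        ∃ (x : Fin (Kc + 1) → Circle2pi) (a : Fin (Kc + 1) → ℝ),
          Function.Injective x ∧ (∀ i, 0 < a i) ∧ w = ∑ i, a i • diracSM (x i)} ∧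
    ∀ t : Circle2pi,
      ∃ (w : MeasureTheory.SignedMeasure Circle2pi) (x : Fin (Kc + 1) → Circle2pi)
        (a : Fin (Kc + 1) → ℝ),
        IsBPCSolution Kc y w ∧ Function.Injective x ∧ (∀ i, 0 < a i) ∧
        (∃ i, x i = t) ∧ w = ∑ i, a i • diracSM (x i) := by
  refine ⟨fun hS => not_countable_univ_circle2pi
    ((hS.biUnion (t := fun w _ => {t | w {t} ≠ 0}) ?_).mono ?_), exists_solution_through hpd⟩
  · rintro _ ⟨-, x, a, -, -, rfl⟩
    exact (Set.countable_range x).mono fun t ht =>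
      mem_range_of_sum_smul_diracSM_singleton_ne_zero ht
  · intro t _
    obtain ⟨w, x, a, hw, hx, ha, ⟨i, rfl⟩, rfl⟩ := exists_solution_through hpd t
    exact Set.mem_biUnion ⟨hw, x, a, hx, ha, rfl⟩ (sum_smul_diracSM_singleton_pos x ha i).ne'
end
end
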